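/- Let Σ^−_{h_X,ν} = {x ∈ Σ : the lower local dimension of ν at x is strictly less than h_X}. If ν(Σ^−_{h_X,ν}) > 0 then E_ℙ(Z) < 1, and if ν(Σ^−_{h_X,ν}) = 1 then E_ℙ(Z) = 0. -/

import Mathlib

open MeasureTheory ProbabilityTheory Filter Set
open scoped ENNReal

noncomputable section

/-- The one-sided symbolic space over the alphabet `{0, …, b-1}`. -/
abbrev SymbSpace (b : ℕ) : Type := ℕ → Fin b

/-- The cylinder `[w]` of sequences starting with the finite word `w`. -/
def cylinder {b : ℕ} (w : List (Fin b)) : Set (SymbSpace b) :=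
  {x | ∀ i : Fin w.length, x i = w.get i}

/-- The prefix `x|_n` of `x` of length `n`, as a finite word. -/
def wordPrefix {b : ℕ} (x : SymbSpace b) (n : ℕ) : List (Fin b) :=
  List.ofFn (fun i : Fin n => x i)

/-- `Y_w = X_{w_1} X_{w_1w_2} ⋯ X_{w_1⋯w_n}`. -/
def cascadeY {b : ℕ} {Ω : Type*} (X : List (Fin b) → Ω → ℝ) (w : List (Fin b)) (ω : Ω) : ℝ :=
  ∏ k ∈ Finset.range w.length, X (w.take (k + 1)) ω

/-- The total mass `Z_n = ∑_{|u| = n} Y_u ν([u])`. -/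
def cascadeZ {b : ℕ} {Ω : Type*} (X : List (Fin b) → Ω → ℝ) (ν : Measure (SymbSpace b))
    (n : ℕ) (ω : Ω) : ℝ :=
  ∑ u : Fin n → Fin b, cascadeY X (List.ofFn u) ω * (ν (cylinder (List.ofFn u))).toReal

/-- `Z = limsup_n Z_n`. -/
def cascadeZlim {b : ℕ} {Ω : Type*} (X : List (Fin b) → Ω → ℝ) (ν : Measure (SymbSpace b))
    (ω : Ω) : ℝ :=
  Filter.limsup (fun n => cascadeZ X ν n ω) atTop

/-- Assumption (M1): the weights `X_u`, `u` a nonempty finite word, are i.i.d. with common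
law that of the nonnegative random variable `X₀` of expectation 1. -/
structure CascadeM1 {b : ℕ} {Ω : Type*} [MeasurableSpace Ω] (P : Measure Ω)
    (X : List (Fin b) → Ω → ℝ) (X₀ : Ω → ℝ) : Prop where
  meas : ∀ w, Measurable (X w)
  nonneg : ∀ w ω, 0 ≤ X w ω
  meas₀ : Measurable X₀
  nonneg₀ : ∀ ω, 0 ≤ X₀ ω
  mean₀ : ∫ ω, X₀ ω ∂P = 1
  indep : iIndepFun
    (fun w : {w : List (Fin b) // w ≠ []} => X w.1) P
  ident : ∀ w : List (Fin b), w ≠ [] → IdentDistrib (X w) X₀ P P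

/-- `h_X = E(X log X) ∈ [0, ∞]` (well defined since `x log x ≥ -e⁻¹` and, by convexity,
`E(X log X) ≥ E(X) log E(X) = 0`), encoded as an extended nonnegative real. -/
def entropyX {Ω : Type*} [MeasurableSpace Ω] (P : Measure Ω) (X₀ : Ω → ℝ) : ℝ≥0∞ :=
  (∫⁻ ω, ENNReal.ofReal (X₀ ω * Real.log (X₀ ω)) ∂P) -
    (∫⁻ ω, ENNReal.ofReal (-(X₀ ω * Real.log (X₀ ω))) ∂P)

/-- The lower local dimension `liminf_n (-log ν([x|_n]) / n)` of `ν` at `x`, valued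
in `[0, ∞]`. -/
def lowerLocalDim {b : ℕ} (ν : Measure (SymbSpace b)) (x : SymbSpace b) : ℝ≥0∞ :=
  Filter.liminf
    (fun n : ℕ => ENNReal.ofReal (-Real.log ((ν (cylinder (wordPrefix x n))).toReal) / n))
    atTop

/-- The upper local dimension `limsup_n (-log ν([x|_n]) / n)` of `ν` at `x`. -/
def upperLocalDim {b : ℕ} (ν : Measure (SymbSpace b)) (x : SymbSpace b) : ℝ≥0∞ :=
  Filter.limsup
    (fun n : ℕ => ENNReal.ofReal (-Real.log ((ν (cylinder (wordPrefix x n))).toReal) / n))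
    atTop

/-- The lower Hausdorff dimension of `ν`: the `ν`-essential infimum of the lower local
dimension. -/
def lowerHausdorffDim {b : ℕ} (ν : Measure (SymbSpace b)) : ℝ≥0∞ :=
  essInf (lowerLocalDim ν) ν

/-- The upper Hausdorff dimension of `ν`: the `ν`-essential supremum of the lower local
dimension. -/
def upperHausdorffDim {b : ℕ} (ν : Measure (SymbSpace b)) : ℝ≥0∞ :=
  essSup (lowerLocalDim ν) ν

/-- The upper packing dimension of `ν`: the `ν`-essential supremum of the upper local
dimension. -/
def upperPackingDim {b : ℕ} (ν : Measure (SymbSpace b)) : ℝ≥0∞ :=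
  essSup (upperLocalDim ν) ν

/-!
Write `Y_k(x) = Y_{x|_k}`. For every finite measure `m` on `Σ` the total masses `Z_n` of the cascade
acting on `m` form a nonnegative martingale, since `E(Y_n(x) ; s) = E(Y_k(x) ; s)` for `k ≤ n` and
every event `s` determined by the words of length at most `k`.

If the lower local dimension of `ν` at `x` is less than `h_X`, then `ν([x|_k]) ≥ e^{-ak}` for
infinitely many `k`, for some `a < h_X`. For such `k`, `Z_k ≤ K` forces `Y_k(x) ≤ K e^{ak}`, so
`E(Y_n(x) ; sup_j Z_j ≤ K) ≤ (K e^{ak})^s E(Y_k(x)^{1-s}) = K^s (e^{as} E(X^{1-s}))^k` for `n ≥ k`.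
The derivative of `E(X^{1-s})` at `s = 0⁺` is `-h_X`, hence `e^{as} E(X^{1-s}) < 1` for small `s`,
and `E(Y_n(x) ; sup_j Z_j ≤ K) → 0`. Integrating over `Σ⁻_{h_X,ν}`, and letting `K → ∞`, the
cascade acting on the restriction of `ν` to `Σ⁻_{h_X,ν}` degenerates almost surely, so that
`E(Z) ≤ 1 - ν(Σ⁻_{h_X,ν})`.
-/

open scoped Topology NNReal

section RealPowers

variable {y s : ℝ}

lemma rpow_one_sub_le (hy : 0 ≤ y) (hs0 : 0 ≤ s) (hs1 : s ≤ 1) :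
    y ^ (1 - s) ≤ (1 - s) * y + s := by
  simpa using Real.geom_mean_le_arith_mean2_weighted (sub_nonneg.2 hs1) hs0 hy zero_le_one
    (sub_add_cancel 1 s)

lemma neg_one_le_sub_rpow_one_sub_div (hy : 0 ≤ y) (hs0 : 0 < s) (hs1 : s ≤ 1) :
    -1 ≤ (y - y ^ (1 - s)) / s := by
  rw [le_div_iff₀ hs0]
  nlinarith [rpow_one_sub_le hy hs0.le hs1]

lemma tendsto_sub_rpow_one_sub_div (hy : 0 ≤ y) :
    Tendsto (fun s : ℝ => (y - y ^ (1 - s)) / s) (𝓝[>] 0) (𝓝 (y * Real.log y)) := by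
  obtain rfl | hy := hy.eq_or_lt
  · have hzero : ∀ᶠ s : ℝ in 𝓝[>] 0, 0 = ((0 : ℝ) - 0 ^ (1 - s)) / s := by
      filter_upwards [nhdsWithin_le_nhds (eventually_lt_nhds one_pos)] with s hs
      rw [Real.zero_rpow (sub_pos.2 hs).ne', sub_zero, zero_div]
    simpa only [zero_mul] using tendsto_const_nhds.congr' hzero
  · have hlim := (tendsto_rpow_sub_one_log (inv_pos.2 hy)).const_mul (-y)
    rw [Real.log_inv, neg_mul_neg] at hlim
    refine hlim.congr fun s => ?_
    rw [Real.rpow_sub hy, Real.rpow_one, Real.inv_rpow hy.le]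
    ring

lemma le_rpow_mul_rpow_one_sub {K : ℝ} (hy : 0 ≤ y) (hyK : y ≤ K) (hs : 0 ≤ s) :
    y ≤ K ^ s * y ^ (1 - s) := by
  obtain rfl | hy := hy.eq_or_lt
  · positivity
  calc y = y ^ s * y ^ (1 - s) := by rw [← Real.rpow_add hy, add_sub_cancel, Real.rpow_one]
    _ ≤ K ^ s * y ^ (1 - s) := by gcongr

end RealPowers

section Fatou

variable {Ω : Type*} [MeasurableSpace Ω] {μ : Measure Ω} {f : ℕ → Ω → ℝ} {g : Ω → ℝ}

lemma lintegral_enorm_le_liminf_of_ae_tendsto (hf : ∀ n, AEMeasurable (f n) μ)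
    (hlim : ∀ᵐ ω ∂μ, Tendsto (fun n => f n ω) atTop (𝓝 (g ω))) :
    ∫⁻ ω, ‖g ω‖ₑ ∂μ ≤ liminf (fun n => ∫⁻ ω, ‖f n ω‖ₑ ∂μ) atTop := by
  calc ∫⁻ ω, ‖g ω‖ₑ ∂μ = ∫⁻ ω, liminf (fun n => ‖f n ω‖ₑ) atTop ∂μ :=
        lintegral_congr_ae <| hlim.mono fun ω hω => hω.enorm.liminf_eq.symm
    _ ≤ liminf (fun n => ∫⁻ ω, ‖f n ω‖ₑ ∂μ) atTop := lintegral_liminf_le' fun n => (hf n).enorm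

lemma ae_eq_zero_of_tendsto_lintegral_enorm (hf : ∀ n, AEMeasurable (f n) μ)
    (hlim : ∀ᵐ ω ∂μ, Tendsto (fun n => f n ω) atTop (𝓝 (g ω)))
    (hL1 : Tendsto (fun n => ∫⁻ ω, ‖f n ω‖ₑ ∂μ) atTop (𝓝 0)) : g =ᵐ[μ] 0 := by
  have hg : ∫⁻ ω, ‖g ω‖ₑ ∂μ = 0 :=
    le_bot_iff.1 ((lintegral_enorm_le_liminf_of_ae_tendsto hf hlim).trans_eq hL1.liminf_eq)
  have hmeas : AEMeasurable g μ := aemeasurable_of_tendsto_metrizable_ae _ hf hlim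
  filter_upwards [(lintegral_eq_zero_iff' hmeas.enorm).1 hg] with ω hω
  exact enorm_eq_zero.1 hω

end Fatou

section FractionalMoments

variable {Ω : Type*} [MeasurableSpace Ω] {P : Measure Ω} {f : Ω → ℝ}

lemma setLIntegral_le_rpow_mul_lintegral_rpow_one_sub {K s : ℝ} (hf : Measurable f)
    (hf0 : ∀ ω, 0 ≤ f ω) (hK : 0 ≤ K) (hs : 0 ≤ s) :
    ∫⁻ ω in {ω | f ω ≤ K}, ENNReal.ofReal (f ω) ∂P
      ≤ ENNReal.ofReal (K ^ s) * ∫⁻ ω, ENNReal.ofReal (f ω ^ (1 - s)) ∂P := by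
  rw [← lintegral_const_mul' _ _ ENNReal.ofReal_ne_top]
  refine (setLIntegral_mono' (measurableSet_le hf measurable_const) fun ω hω => ?_).trans
    (setLIntegral_le_lintegral _ _)
  rw [← ENNReal.ofReal_mul (by positivity)]
  exact ENNReal.ofReal_le_ofReal (le_rpow_mul_rpow_one_sub (hf0 ω) hω hs)

lemma integrable_rpow_one_sub [IsFiniteMeasure P] {s : ℝ} (hf : Integrable f P)
    (hf0 : ∀ ω, 0 ≤ f ω) (hs0 : 0 ≤ s) (hs1 : s ≤ 1) :
    Integrable (fun ω => f ω ^ (1 - s)) P := by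
  refine ((hf.const_mul (1 - s)).add (integrable_const s)).mono'
    (hf.aemeasurable.pow_const _).aestronglyMeasurable (ae_of_all _ fun ω => ?_)
  rw [Real.norm_of_nonneg (Real.rpow_nonneg (hf0 ω) _)]
  exact rpow_one_sub_le (hf0 ω) hs0 hs1

lemma ofReal_add_add_ofReal_neg {t c : ℝ} (hc : 0 ≤ c) (ht : -c ≤ t) :
    ENNReal.ofReal (t + c) + ENNReal.ofReal (-t) = ENNReal.ofReal t + ENNReal.ofReal c := by
  obtain h | h := le_total 0 t
  · rw [ENNReal.ofReal_of_nonpos (neg_nonpos.2 h), add_zero, ENNReal.ofReal_add h hc]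
  · rw [ENNReal.ofReal_of_nonpos h, zero_add,
      ← ENNReal.ofReal_add (by linarith) (neg_nonneg.2 h), add_neg_cancel_comm]

-- The shift by `1` makes the integrand nonnegative, so that Fatou's lemma applies to it.
lemma add_one_lt_lintegral_of_lt_entropyX [IsProbabilityMeasure P] {a : ℝ≥0∞}
    (hf : Measurable f) (hf0 : ∀ ω, 0 ≤ f ω) (ha : a < entropyX P f) :
    a + 1 < ∫⁻ ω, ENNReal.ofReal (f ω * Real.log (f ω) + 1) ∂P := by
  have hlower (ω : Ω) : -1 ≤ f ω * Real.log (f ω) := by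
    linarith [hf0 ω, Real.self_sub_one_le_mul_log (hf0 ω)]
  set pos := ∫⁻ ω, ENNReal.ofReal (f ω * Real.log (f ω)) ∂P
  set neg := ∫⁻ ω, ENNReal.ofReal (-(f ω * Real.log (f ω))) ∂P
  have hshift : (∫⁻ ω, ENNReal.ofReal (f ω * Real.log (f ω) + 1) ∂P) + neg = pos + 1 := by
    rw [← lintegral_add_left (by fun_prop)]
    simp_rw [ofReal_add_add_ofReal_neg zero_le_one (hlower _)]
    rw [lintegral_add_right _ measurable_const]
    simp only [ENNReal.ofReal_one, lintegral_one, measure_univ, pos]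
  refine lt_of_add_lt_add_right (a := neg) ?_
  rw [hshift, add_right_comm]
  exact ENNReal.add_lt_add_right ENNReal.one_ne_top (lt_tsub_iff_right.1 ha)

lemma eventually_add_one_lt_lintegral_of_lt_entropyX [IsProbabilityMeasure P] {a : ℝ≥0∞}
    (hf : Measurable f) (hf0 : ∀ ω, 0 ≤ f ω) (ha : a < entropyX P f) :
    ∀ᶠ s : ℝ in 𝓝[>] 0,
      a + 1 < ∫⁻ ω, ENNReal.ofReal ((f ω - f ω ^ (1 - s)) / s + 1) ∂P := by
  refine eventually_lt_of_lt_liminf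
    ((add_one_lt_lintegral_of_lt_entropyX hf hf0 ha).trans_le ?_)
  refine le_trans (lintegral_mono fun ω => ?_) (lintegral_liminf_le fun s => by fun_prop)
  have hlim := (tendsto_sub_rpow_one_sub_div (hf0 ω)).add_const 1
  exact (ENNReal.tendsto_ofReal hlim).liminf_eq.ge

lemma exists_integral_rpow_one_sub_lt_exp [IsProbabilityMeasure P] {a : ℝ≥0}
    (hf : Measurable f) (hf0 : ∀ ω, 0 ≤ f ω) (hmean : ∫ ω, f ω ∂P = 1)
    (ha : a < entropyX P f) :
    ∃ s ∈ Ioc (0 : ℝ) 1, ∫ ω, f ω ^ (1 - s) ∂P < Real.exp (-(a * s)) := by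
  have hint : Integrable f P := .of_integral_ne_zero (by simp [hmean])
  obtain ⟨s, hgap, hs0, hs1⟩ := ((eventually_add_one_lt_lintegral_of_lt_entropyX hf hf0 ha).and
    (Ioc_mem_nhdsGT one_pos)).exists
  have hpow := integrable_rpow_one_sub hint hf0 hs0.le hs1
  have hdiff : Integrable (fun ω => (f ω - f ω ^ (1 - s)) / s) P := (hint.sub hpow).div_const s
  have hquot : ∫ ω, ((f ω - f ω ^ (1 - s)) / s + 1) ∂P
      = (1 - ∫ ω, f ω ^ (1 - s) ∂P) / s + 1 := by
    rw [integral_add hdiff (integrable_const 1), integral_div, integral_sub hint hpow, hmean,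
      integral_const, probReal_univ, one_smul]
  have hgap : (a : ℝ) * s < 1 - ∫ ω, f ω ^ (1 - s) ∂P := by
    rwa [← ofReal_integral_eq_lintegral_ofReal (f := fun ω => (f ω - f ω ^ (1 - s)) / s + 1)
      (hdiff.add (integrable_const 1)) (ae_of_all _ fun ω => neg_le_iff_add_nonneg.1
        (neg_one_le_sub_rpow_one_sub_div (hf0 ω) hs0 hs1)), hquot, ← ENNReal.ofReal_coe_nnreal,
      ← ENNReal.ofReal_one, ← ENNReal.ofReal_add a.coe_nonneg zero_le_one,
      ENNReal.ofReal_lt_ofReal_iff_of_nonneg (by positivity), add_lt_add_iff_right,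
      lt_div_iff₀ hs0] at hgap
  exact ⟨s, ⟨hs0, hs1⟩, by linarith [Real.add_one_le_exp (-(a * s))]⟩

lemma exists_exp_mul_lintegral_rpow_one_sub_lt_one [IsProbabilityMeasure P] {a : ℝ≥0}
    (hf : Measurable f) (hf0 : ∀ ω, 0 ≤ f ω) (hmean : ∫ ω, f ω ∂P = 1)
    (ha : a < entropyX P f) :
    ∃ s : ℝ, 0 < s ∧
      ENNReal.ofReal (Real.exp (a * s)) * ∫⁻ ω, ENNReal.ofReal (f ω ^ (1 - s)) ∂P < 1 := by
  have hint : Integrable f P := .of_integral_ne_zero (by simp [hmean])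
  obtain ⟨s, ⟨hs0, hs1⟩, hlt⟩ := exists_integral_rpow_one_sub_lt_exp hf hf0 hmean ha
  refine ⟨s, hs0, ?_⟩
  rw [← ofReal_integral_eq_lintegral_ofReal (integrable_rpow_one_sub hint hf0 hs0.le hs1)
      (ae_of_all _ fun ω => Real.rpow_nonneg (hf0 ω) _),
    ← ENNReal.ofReal_mul (Real.exp_pos _).le, ENNReal.ofReal_lt_one]
  calc Real.exp (a * s) * ∫ ω, f ω ^ (1 - s) ∂P
      < Real.exp (a * s) * Real.exp (-(a * s)) := by gcongr
    _ = 1 := by rw [← Real.exp_add, add_neg_cancel, Real.exp_zero]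

end FractionalMoments

section Cylinders

variable {b : ℕ}

lemma length_wordPrefix (x : SymbSpace b) (n : ℕ) : (wordPrefix x n).length = n :=
  List.length_ofFn

lemma take_wordPrefix (x : SymbSpace b) {k n : ℕ} (hkn : k ≤ n) :
    (wordPrefix x n).take k = wordPrefix x k :=
  List.ext_getElem (by simp [wordPrefix, hkn]) (by simp [wordPrefix])

/-- The projection of `Σ` onto words of length `n`, encoded as functions on `Fin n`; the list
`List.ofFn (firstLetters n x)` is `wordPrefix x n` by definition. -/
def firstLetters (n : ℕ) (x : SymbSpace b) : Fin n → Fin b := fun i => x i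

lemma measurable_firstLetters (n : ℕ) : Measurable (firstLetters (b := b) n) := by
  unfold firstLetters
  fun_prop

lemma cylinder_ofFn {n : ℕ} (u : Fin n → Fin b) :
    cylinder (List.ofFn u) = firstLetters n ⁻¹' {u} := by
  ext x
  simp [_root_.cylinder, firstLetters, funext_iff, Fin.forall_iff]

lemma measurable_comp_wordPrefix {β : Type*} [MeasurableSpace β] (F : List (Fin b) → β) (n : ℕ) :
    Measurable fun x : SymbSpace b => F (wordPrefix x n) :=
  (measurable_of_finite fun u : Fin n → Fin b => F (List.ofFn u)).comp (measurable_firstLetters n)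

lemma measurable_uncurry_comp_wordPrefix {Ω β : Type*} [MeasurableSpace Ω]
    [MeasurableSpace β] {G : List (Fin b) → Ω → β} (hG : ∀ w, Measurable (G w)) (n : ℕ) :
    Measurable (Function.uncurry fun (ω : Ω) (x : SymbSpace b) => G (wordPrefix x n) ω) :=
  (measurable_from_prod_countable_left (f := fun p : Ω × (Fin n → Fin b) => G (List.ofFn p.2) p.1)
    fun u => hG (List.ofFn u)).comp
      (measurable_fst.prodMk ((measurable_firstLetters n).comp measurable_snd))

lemma lintegral_comp_wordPrefix (m : Measure (SymbSpace b)) (F : List (Fin b) → ℝ≥0∞) (n : ℕ) :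
    ∫⁻ x, F (wordPrefix x n) ∂m
      = ∑ u : Fin n → Fin b, F (List.ofFn u) * m (cylinder (List.ofFn u)) := by
  have hmap : ∫⁻ x, F (wordPrefix x n) ∂m
      = ∫⁻ u : Fin n → Fin b, F (List.ofFn u) ∂(m.map (firstLetters n)) := by
    rw [lintegral_map (measurable_of_finite _) (measurable_firstLetters n)]
    rfl
  rw [hmap, lintegral_fintype]
  refine Finset.sum_congr rfl fun u _ => ?_
  rw [Measure.map_apply (measurable_firstLetters n) (measurableSet_singleton u), cylinder_ofFn]

lemma ae_forall_measure_cylinder_wordPrefix_ne_zero (m : Measure (SymbSpace b)) :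
    ∀ᵐ x ∂m, ∀ k, m (cylinder (wordPrefix x k)) ≠ 0 := by
  refine ae_all_iff.2 fun k => ?_
  have hnull : m (⋃ u ∈ {u : Fin k → Fin b | m (cylinder (List.ofFn u)) = 0},
      cylinder (List.ofFn u)) = 0 :=
    (measure_biUnion_null_iff (to_countable _)).2 fun u hu => hu
  refine measure_mono_null (fun x hx => ?_) hnull
  have hx : m (cylinder (List.ofFn (firstLetters k x))) = 0 := not_not.1 hx
  refine mem_biUnion (x := firstLetters k x) hx ?_
  rw [cylinder_ofFn]
  rfl

end Cylinders

section LocalDimension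

variable {b : ℕ} {ν : Measure (SymbSpace b)}

/-- The set of points at which the lower local dimension of `ν` is less than `h`; it is
`Σ⁻_{h_X,ν}` when `h` is `entropyX P X₀`. -/
def subcriticalSet (ν : Measure (SymbSpace b)) (h : ℝ≥0∞) : Set (SymbSpace b) :=
  {x | lowerLocalDim ν x < h}

lemma measurable_lowerLocalDim (ν : Measure (SymbSpace b)) : Measurable (lowerLocalDim ν) :=
  Measurable.liminf fun n => measurable_comp_wordPrefix
    (fun w => ENNReal.ofReal (-Real.log ((ν (cylinder w)).toReal) / n)) n

lemma measurableSet_subcriticalSet (ν : Measure (SymbSpace b)) (h : ℝ≥0∞) :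
    MeasurableSet (subcriticalSet ν h) :=
  measurableSet_lt (measurable_lowerLocalDim ν) measurable_const

-- Pitfall: as `Real.log 0 = 0`, `lowerLocalDim ν x = 0` when some cylinder around `x` is null.
lemma frequently_exp_neg_mul_le_measure_cylinder [IsFiniteMeasure ν] {x : SymbSpace b} {a : ℝ≥0}
    (ha : lowerLocalDim ν x < a) (hx : ∀ k, ν (cylinder (wordPrefix x k)) ≠ 0) :
    ∃ᶠ k : ℕ in atTop, Real.exp (-(a * k)) ≤ (ν (cylinder (wordPrefix x k))).toReal := by
  refine ((frequently_lt_of_liminf_lt (h := ha)).and_eventually (eventually_gt_atTop 0)).mono ?_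
  rintro k ⟨hlt, hk⟩
  rw [← ENNReal.ofReal_coe_nnreal] at hlt
  have hlog := lt_of_not_ge fun hge => hlt.not_ge (ENNReal.ofReal_le_ofReal hge)
  rw [div_lt_iff₀ (Nat.cast_pos.2 hk)] at hlog
  rw [← Real.le_log_iff_exp_le (ENNReal.toReal_pos (hx k) (measure_ne_top _ _))]
  linarith

end LocalDimension

section TotalMass

variable {b : ℕ} {Ω : Type*} {X : List (Fin b) → Ω → ℝ}

lemma cascadeY_wordPrefix (x : SymbSpace b) (n : ℕ) (ω : Ω) :
    cascadeY X (wordPrefix x n) ω = ∏ k ∈ Finset.range n, X (wordPrefix x (k + 1)) ω := by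
  rw [cascadeY, length_wordPrefix]
  refine Finset.prod_congr rfl fun k hk => ?_
  rw [take_wordPrefix x (Finset.mem_range.1 hk)]

lemma cascadeY_wordPrefix_zero (x : SymbSpace b) (ω : Ω) : cascadeY X (wordPrefix x 0) ω = 1 := by
  rw [cascadeY_wordPrefix, Finset.prod_range_zero]

lemma cascadeY_wordPrefix_succ (x : SymbSpace b) (n : ℕ) (ω : Ω) :
    cascadeY X (wordPrefix x (n + 1)) ω
      = cascadeY X (wordPrefix x n) ω * X (wordPrefix x (n + 1)) ω := by
  rw [cascadeY_wordPrefix, cascadeY_wordPrefix, Finset.prod_range_succ]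

lemma cascadeY_nonneg (hX : ∀ w ω, 0 ≤ X w ω) (w : List (Fin b)) (ω : Ω) :
    0 ≤ cascadeY X w ω :=
  Finset.prod_nonneg fun _ _ => hX _ _

lemma cascadeZ_nonneg (hX : ∀ w ω, 0 ≤ X w ω) (m : Measure (SymbSpace b)) (n : ℕ) (ω : Ω) :
    0 ≤ cascadeZ X m n ω :=
  Finset.sum_nonneg fun _ _ => mul_nonneg (cascadeY_nonneg hX _ _) ENNReal.toReal_nonneg

lemma cascadeZ_add (m₁ m₂ : Measure (SymbSpace b)) [IsFiniteMeasure m₁] [IsFiniteMeasure m₂]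
    (n : ℕ) (ω : Ω) :
    cascadeZ X (m₁ + m₂) n ω = cascadeZ X m₁ n ω + cascadeZ X m₂ n ω := by
  simp only [cascadeZ, Measure.add_apply, ENNReal.toReal_add (measure_ne_top _ _)
    (measure_ne_top _ _), mul_add, Finset.sum_add_distrib]

lemma cascadeY_mul_measure_cylinder_le_cascadeZ (hX : ∀ w ω, 0 ≤ X w ω)
    (m : Measure (SymbSpace b)) (x : SymbSpace b) (k : ℕ) (ω : Ω) :
    cascadeY X (wordPrefix x k) ω * (m (cylinder (wordPrefix x k))).toReal
      ≤ cascadeZ X m k ω :=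
  Finset.single_le_sum (f := fun u : Fin k → Fin b =>
    cascadeY X (List.ofFn u) ω * (m (cylinder (List.ofFn u))).toReal)
    (fun _ _ => mul_nonneg (cascadeY_nonneg hX _ _) ENNReal.toReal_nonneg)
    (Finset.mem_univ (firstLetters k x))

lemma ofReal_cascadeZ (hX : ∀ w ω, 0 ≤ X w ω) (m : Measure (SymbSpace b)) [IsFiniteMeasure m]
    (n : ℕ) (ω : Ω) :
    ENNReal.ofReal (cascadeZ X m n ω)
      = ∫⁻ x, ENNReal.ofReal (cascadeY X (wordPrefix x n) ω) ∂m := by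
  rw [lintegral_comp_wordPrefix m (fun w => ENNReal.ofReal (cascadeY X w ω)), cascadeZ,
    ENNReal.ofReal_sum_of_nonneg
      fun _ _ => mul_nonneg (cascadeY_nonneg hX _ _) ENNReal.toReal_nonneg]
  refine Finset.sum_congr rfl fun u _ => ?_
  rw [ENNReal.ofReal_mul (cascadeY_nonneg hX _ _), ENNReal.ofReal_toReal (measure_ne_top _ _)]

end TotalMass

section LengthFiltration

variable {b : ℕ} {Ω : Type*} [mΩ : MeasurableSpace Ω] {X : List (Fin b) → Ω → ℝ}

/-- The filtration whose `n`-th σ-algebra is generated by the weights of the nonempty words of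
length at most `n`. The empty word is left out because `X []` is not part of the cascade. -/
def lengthFiltration (hX : ∀ w, Measurable (X w)) : Filtration ℕ mΩ where
  seq n := ⨆ w ∈ {w : {w : List (Fin b) // w ≠ []} | w.1.length ≤ n},
    MeasurableSpace.comap (X w.1) inferInstance
  mono' _ _ hij := iSup₂_le fun _ hw => le_iSup₂_of_le _ (le_trans hw hij) le_rfl
  le' _ := iSup₂_le fun w _ => (hX w.1).comap_le

lemma measurable_lengthFiltration (hX : ∀ w, Measurable (X w)) {n : ℕ} {w : List (Fin b)}
    (hw : w ≠ []) (hn : w.length ≤ n) : Measurable[lengthFiltration hX n] (X w) := by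
  rw [measurable_iff_comap_le]
  exact le_iSup₂_of_le (f := fun (v : {v : List (Fin b) // v ≠ []})
    (_ : v ∈ {v : {v : List (Fin b) // v ≠ []} | v.1.length ≤ n}) =>
      MeasurableSpace.comap (X v.1) inferInstance) ⟨w, hw⟩ hn le_rfl

lemma measurable_cascadeY_lengthFiltration (hX : ∀ w, Measurable (X w)) {n : ℕ}
    {w : List (Fin b)} (hn : w.length ≤ n) :
    Measurable[lengthFiltration hX n] (cascadeY X w) := by
  refine Finset.measurable_prod _ fun k hk => ?_
  have hk : k < w.length := Finset.mem_range.1 hk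
  have hlen : (w.take (k + 1)).length = k + 1 := List.length_take_of_le hk
  refine measurable_lengthFiltration hX (List.ne_nil_of_length_eq_add_one hlen) ?_
  exact hlen.trans_le ((Nat.succ_le_of_lt hk).trans hn)

lemma measurable_cascadeY (hX : ∀ w, Measurable (X w)) (w : List (Fin b)) :
    Measurable (cascadeY X w) :=
  (measurable_cascadeY_lengthFiltration hX le_rfl).mono ((lengthFiltration hX).le _) le_rfl

lemma measurable_cascadeZ_lengthFiltration (hX : ∀ w, Measurable (X w))
    (m : Measure (SymbSpace b)) (n : ℕ) : Measurable[lengthFiltration hX n] (cascadeZ X m n) :=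
  Finset.measurable_sum _ fun _ _ =>
    (measurable_cascadeY_lengthFiltration hX List.length_ofFn.le).mul_const _

lemma measurable_cascadeZ (hX : ∀ w, Measurable (X w)) (m : Measure (SymbSpace b)) (n : ℕ) :
    Measurable (cascadeZ X m n) :=
  (measurable_cascadeZ_lengthFiltration hX m n).mono ((lengthFiltration hX).le _) le_rfl

lemma setLIntegral_cascadeZ (hX : ∀ w, Measurable (X w)) (hX0 : ∀ w ω, 0 ≤ X w ω)
    (P : Measure Ω) [SFinite P] (m : Measure (SymbSpace b)) [IsFiniteMeasure m] (n : ℕ)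
    (s : Set Ω) :
    ∫⁻ ω in s, ENNReal.ofReal (cascadeZ X m n ω) ∂P
      = ∫⁻ x, ∫⁻ ω in s, ENNReal.ofReal (cascadeY X (wordPrefix x n) ω) ∂P ∂m := by
  simp_rw [ofReal_cascadeZ hX0]
  exact lintegral_lintegral_swap (measurable_uncurry_comp_wordPrefix
    (fun w => (measurable_cascadeY hX w).ennreal_ofReal) n).aemeasurable

end LengthFiltration

namespace CascadeM1

variable {b : ℕ} {Ω : Type*} [MeasurableSpace Ω] {P : Measure Ω} {X : List (Fin b) → Ω → ℝ}
  {X₀ : Ω → ℝ}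

lemma indep_lengthFiltration_comap (hM : CascadeM1 P X X₀) {n : ℕ} {w : List (Fin b)}
    (hw : n < w.length) :
    Indep (lengthFiltration hM.meas n) (MeasurableSpace.comap (X w) inferInstance) P := by
  have hne : w ≠ [] := List.ne_nil_of_length_pos (Nat.zero_lt_of_lt hw)
  have hdisj : Disjoint {v : {v : List (Fin b) // v ≠ []} | v.1.length ≤ n} {⟨w, hne⟩} :=
    disjoint_singleton_right.2 hw.not_ge
  have h := indep_iSup_of_disjoint
    (m := fun v : {v : List (Fin b) // v ≠ []} => MeasurableSpace.comap (X v.1) inferInstance)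
    (fun v => (hM.meas v.1).comap_le) hM.indep.iIndep hdisj
  simp only [mem_singleton_iff, iSup_iSup_eq_left] at h
  exact h

lemma lintegral_mul_comp_weight (hM : CascadeM1 P X X₀) {n : ℕ} {w : List (Fin b)}
    (hw : n < w.length) {f : Ω → ℝ≥0∞} (hf : Measurable[lengthFiltration hM.meas n] f)
    {g : ℝ → ℝ≥0∞} (hg : Measurable g) :
    ∫⁻ ω, f ω * g (X w ω) ∂P = (∫⁻ ω, f ω ∂P) * ∫⁻ ω, g (X₀ ω) ∂P := by
  have hne : w ≠ [] := List.ne_nil_of_length_pos (Nat.zero_lt_of_lt hw)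
  refine (lintegral_mul_eq_lintegral_mul_lintegral_of_independent_measurableSpace
    ((lengthFiltration hM.meas).le n) (hM.meas w).comap_le (hM.indep_lengthFiltration_comap hw) hf
    (hg.comp (comap_measurable _))).trans ?_
  congr 1
  exact ((hM.ident w hne).comp hg).lintegral_eq

lemma lintegral_ofReal_weight (hM : CascadeM1 P X X₀) : ∫⁻ ω, ENNReal.ofReal (X₀ ω) ∂P = 1 := by
  have hint : Integrable X₀ P := .of_integral_ne_zero (by simp [hM.mean₀])
  rw [← ofReal_integral_eq_lintegral_ofReal hint (ae_of_all _ hM.nonneg₀), hM.mean₀,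
    ENNReal.ofReal_one]

lemma setLIntegral_cascadeY_succ (hM : CascadeM1 P X X₀) (x : SymbSpace b) (n : ℕ) {s : Set Ω}
    (hs : MeasurableSet[lengthFiltration hM.meas n] s) :
    ∫⁻ ω in s, ENNReal.ofReal (cascadeY X (wordPrefix x (n + 1)) ω) ∂P
      = ∫⁻ ω in s, ENNReal.ofReal (cascadeY X (wordPrefix x n) ω) ∂P := by
  have hsΩ : MeasurableSet s := (lengthFiltration hM.meas).le n s hs
  have hY : Measurable[lengthFiltration hM.meas n]
      fun ω => ENNReal.ofReal (cascadeY X (wordPrefix x n) ω) :=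
    (measurable_cascadeY_lengthFiltration hM.meas (length_wordPrefix x n).le).ennreal_ofReal
  have hstep := hM.lintegral_mul_comp_weight
    (n.lt_succ_self.trans_eq (length_wordPrefix x (n + 1)).symm) (hY.indicator hs)
    ENNReal.measurable_ofReal
  rw [hM.lintegral_ofReal_weight, mul_one, lintegral_indicator hsΩ] at hstep
  rw [← hstep, ← lintegral_indicator hsΩ]
  simp_rw [cascadeY_wordPrefix_succ, ENNReal.ofReal_mul (cascadeY_nonneg hM.nonneg _ _),
    indicator_mul_left]

lemma setLIntegral_cascadeY_of_le (hM : CascadeM1 P X X₀) (x : SymbSpace b) {n N : ℕ}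
    (hnN : n ≤ N) {s : Set Ω} (hs : MeasurableSet[lengthFiltration hM.meas n] s) :
    ∫⁻ ω in s, ENNReal.ofReal (cascadeY X (wordPrefix x N) ω) ∂P
      = ∫⁻ ω in s, ENNReal.ofReal (cascadeY X (wordPrefix x n) ω) ∂P := by
  induction N, hnN using Nat.le_induction with
  | base => rfl
  | succ N hN ih =>
    rw [hM.setLIntegral_cascadeY_succ x N ((lengthFiltration hM.meas).mono hN s hs), ih]

variable [IsProbabilityMeasure P]

lemma lintegral_cascadeY_rpow (hM : CascadeM1 P X X₀) (x : SymbSpace b) (t : ℝ) (n : ℕ) :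
    ∫⁻ ω, ENNReal.ofReal (cascadeY X (wordPrefix x n) ω ^ t) ∂P
      = (∫⁻ ω, ENNReal.ofReal (X₀ ω ^ t) ∂P) ^ n := by
  induction n with
  | zero => simp [cascadeY_wordPrefix_zero]
  | succ n ih =>
    have hY : Measurable[lengthFiltration hM.meas n]
        fun ω => ENNReal.ofReal (cascadeY X (wordPrefix x n) ω ^ t) :=
      ((measurable_cascadeY_lengthFiltration hM.meas
        (length_wordPrefix x n).le).pow_const t).ennreal_ofReal
    rw [pow_succ, ← ih, ← hM.lintegral_mul_comp_weight
      (n.lt_succ_self.trans_eq (length_wordPrefix x (n + 1)).symm) hY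
      (g := fun y => ENNReal.ofReal (y ^ t)) (by fun_prop)]
    refine lintegral_congr fun ω => ?_
    have hY0 := cascadeY_nonneg hM.nonneg (wordPrefix x n) ω
    rw [cascadeY_wordPrefix_succ, Real.mul_rpow hY0 (hM.nonneg _ _),
      ENNReal.ofReal_mul (Real.rpow_nonneg hY0 _)]

lemma lintegral_cascadeY (hM : CascadeM1 P X X₀) (x : SymbSpace b) (n : ℕ) :
    ∫⁻ ω, ENNReal.ofReal (cascadeY X (wordPrefix x n) ω) ∂P = 1 := by
  simpa [hM.lintegral_ofReal_weight] using hM.lintegral_cascadeY_rpow x 1 n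

lemma lintegral_cascadeZ (hM : CascadeM1 P X X₀) (m : Measure (SymbSpace b)) [IsFiniteMeasure m]
    (n : ℕ) : ∫⁻ ω, ENNReal.ofReal (cascadeZ X m n ω) ∂P = m univ := by
  simpa [hM.lintegral_cascadeY] using setLIntegral_cascadeZ hM.meas hM.nonneg P m n univ

lemma martingale_cascadeZ (hM : CascadeM1 P X X₀) (m : Measure (SymbSpace b))
    [IsFiniteMeasure m] : Martingale (cascadeZ X m) (lengthFiltration hM.meas) P := by
  have hmeas (n : ℕ) := measurable_cascadeZ hM.meas m n
  have hnonneg (n : ℕ) (s : Set Ω) : 0 ≤ᵐ[P.restrict s] cascadeZ X m n :=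
    ae_of_all _ (cascadeZ_nonneg hM.nonneg m n)
  refine martingale_of_setIntegral_eq_succ
    (fun n => (measurable_cascadeZ_lengthFiltration hM.meas m n).stronglyMeasurable)
    (fun n => ?_) fun n s hs => ?_
  · refine ⟨(hmeas n).aestronglyMeasurable, ?_⟩
    rw [hasFiniteIntegral_iff_ofReal (ae_of_all _ (cascadeZ_nonneg hM.nonneg m n)),
      hM.lintegral_cascadeZ]
    exact measure_lt_top _ _
  · rw [integral_eq_lintegral_of_nonneg_ae (hnonneg n s) (hmeas n).aestronglyMeasurable,
      integral_eq_lintegral_of_nonneg_ae (hnonneg (n + 1) s) (hmeas (n + 1)).aestronglyMeasurable,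
      setLIntegral_cascadeZ hM.meas hM.nonneg, setLIntegral_cascadeZ hM.meas hM.nonneg]
    simp_rw [hM.setLIntegral_cascadeY_succ _ n hs]

lemma ae_tendsto_cascadeZlim (hM : CascadeM1 P X X₀) (m : Measure (SymbSpace b))
    [IsFiniteMeasure m] :
    ∀ᵐ ω ∂P, Tendsto (fun n => cascadeZ X m n ω) atTop (𝓝 (cascadeZlim X m ω)) := by
  have hbdd (n : ℕ) : eLpNorm (cascadeZ X m n) 1 P ≤ (m univ).toNNReal := by
    rw [eLpNorm_one_eq_lintegral_enorm, ENNReal.coe_toNNReal (measure_ne_top _ _),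
      ← hM.lintegral_cascadeZ m n]
    simp_rw [Real.enorm_of_nonneg (cascadeZ_nonneg hM.nonneg m n _), le_refl]
  filter_upwards [(hM.martingale_cascadeZ m).submartingale.exists_ae_tendsto_of_bdd hbdd]
    with ω ⟨c, hc⟩
  rwa [cascadeZlim, hc.limsup_eq]

lemma lintegral_enorm_cascadeZlim_le (hM : CascadeM1 P X X₀) (m : Measure (SymbSpace b))
    [IsFiniteMeasure m] : ∫⁻ ω, ‖cascadeZlim X m ω‖ₑ ∂P ≤ m univ := by
  have hfatou := lintegral_enorm_le_liminf_of_ae_tendsto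
    (fun n => (measurable_cascadeZ hM.meas m n).aemeasurable) (hM.ae_tendsto_cascadeZlim m)
  simpa only [Real.enorm_of_nonneg (cascadeZ_nonneg hM.nonneg m _ _), hM.lintegral_cascadeZ,
    liminf_const] using hfatou

lemma cascadeZlim_add_ae_eq (hM : CascadeM1 P X X₀) (m₁ m₂ : Measure (SymbSpace b))
    [IsFiniteMeasure m₁] [IsFiniteMeasure m₂] :
    cascadeZlim X (m₁ + m₂) =ᵐ[P] cascadeZlim X m₁ + cascadeZlim X m₂ := by
  filter_upwards [hM.ae_tendsto_cascadeZlim m₁, hM.ae_tendsto_cascadeZlim m₂] with ω h₁ h₂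
  exact ((h₁.add h₂).congr fun n => (cascadeZ_add m₁ m₂ n ω).symm).limsup_eq

lemma setLIntegral_cascadeY_le_pow (hM : CascadeM1 P X X₀) (ν : Measure (SymbSpace b))
    (x : SymbSpace b) {K a s : ℝ} (hK : 0 ≤ K) (hs : 0 ≤ s) {k n : ℕ} (hkn : k ≤ n)
    (hk : Real.exp (-(a * k)) ≤ (ν (cylinder (wordPrefix x k))).toReal) :
    ∫⁻ ω in {ω | ∀ j, cascadeZ X ν j ω ≤ K}, ENNReal.ofReal (cascadeY X (wordPrefix x n) ω) ∂P
      ≤ ENNReal.ofReal (K ^ s) * (ENNReal.ofReal (Real.exp (a * s)) *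
          ∫⁻ ω, ENNReal.ofReal (X₀ ω ^ (1 - s)) ∂P) ^ k := by
  set L := K * Real.exp (a * k)
  have hL : L ^ s = K ^ s * Real.exp (a * s) ^ k := by
    rw [Real.mul_rpow hK (Real.exp_pos _).le, ← Real.exp_mul, ← Real.exp_nat_mul]
    ring_nf
  have hsub : {ω | ∀ j, cascadeZ X ν j ω ≤ K} ⊆ {ω | cascadeY X (wordPrefix x k) ω ≤ L} := by
    intro ω hω
    have hYK : cascadeY X (wordPrefix x k) ω * Real.exp (-(a * k)) ≤ K :=
      calc _ ≤ cascadeY X (wordPrefix x k) ω * (ν (cylinder (wordPrefix x k))).toReal :=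
            mul_le_mul_of_nonneg_left hk (cascadeY_nonneg hM.nonneg _ _)
        _ ≤ cascadeZ X ν k ω := cascadeY_mul_measure_cylinder_le_cascadeZ hM.nonneg ν x k ω
        _ ≤ K := hω k
    rwa [Real.exp_neg, ← div_eq_mul_inv, div_le_iff₀ (Real.exp_pos _)] at hYK
  calc _ ≤ ∫⁻ ω in {ω | cascadeY X (wordPrefix x k) ω ≤ L},
        ENNReal.ofReal (cascadeY X (wordPrefix x n) ω) ∂P := lintegral_mono_set hsub
    _ = ∫⁻ ω in {ω | cascadeY X (wordPrefix x k) ω ≤ L},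
        ENNReal.ofReal (cascadeY X (wordPrefix x k) ω) ∂P :=
      hM.setLIntegral_cascadeY_of_le x hkn <| measurableSet_le
        (measurable_cascadeY_lengthFiltration hM.meas (length_wordPrefix x k).le) measurable_const
    _ ≤ ENNReal.ofReal (L ^ s) *
        ∫⁻ ω, ENNReal.ofReal (cascadeY X (wordPrefix x k) ω ^ (1 - s)) ∂P :=
      setLIntegral_le_rpow_mul_lintegral_rpow_one_sub (measurable_cascadeY hM.meas _)
        (cascadeY_nonneg hM.nonneg _) (by positivity) hs
    _ = _ := by
      rw [hL, hM.lintegral_cascadeY_rpow, ENNReal.ofReal_mul (by positivity),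
        ENNReal.ofReal_pow (Real.exp_pos _).le, mul_pow, mul_assoc]

lemma tendsto_setLIntegral_cascadeY (hM : CascadeM1 P X X₀) {ν : Measure (SymbSpace b)}
    [IsFiniteMeasure ν] {x : SymbSpace b} (hx : x ∈ subcriticalSet ν (entropyX P X₀))
    (hpos : ∀ k, ν (cylinder (wordPrefix x k)) ≠ 0) {K : ℝ} (hK : 0 ≤ K) :
    Tendsto (fun n => ∫⁻ ω in {ω | ∀ k, cascadeZ X ν k ω ≤ K},
      ENNReal.ofReal (cascadeY X (wordPrefix x n) ω) ∂P) atTop (𝓝 0) := by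
  obtain ⟨a, hxa, hah⟩ := ENNReal.lt_iff_exists_nnreal_btwn.1 hx
  obtain ⟨s, hs, hr⟩ :=
    exists_exp_mul_lintegral_rpow_one_sub_lt_one hM.meas₀ hM.nonneg₀ hM.mean₀ hah
  have hgeom := ENNReal.Tendsto.const_mul (ENNReal.tendsto_pow_atTop_nhds_zero_of_lt_one hr)
    (.inr (ENNReal.ofReal_ne_top (r := K ^ s)))
  rw [mul_zero] at hgeom
  refine ENNReal.tendsto_nhds_zero.2 fun ε hε => ?_
  obtain ⟨k, hk, hkε⟩ := ((frequently_exp_neg_mul_le_measure_cylinder hxa hpos).and_eventually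
    (hgeom.eventually_le_const hε)).exists
  filter_upwards [eventually_ge_atTop k] with n hn
  exact (hM.setLIntegral_cascadeY_le_pow ν x hK hs.le hn hk).trans hkε

lemma tendsto_setLIntegral_cascadeZ_restrict_subcriticalSet (hM : CascadeM1 P X X₀)
    (ν : Measure (SymbSpace b)) [IsFiniteMeasure ν] {K : ℝ} (hK : 0 ≤ K) :
    Tendsto (fun n => ∫⁻ ω in {ω | ∀ k, cascadeZ X ν k ω ≤ K}, ENNReal.ofReal
      (cascadeZ X (ν.restrict (subcriticalSet ν (entropyX P X₀))) n ω) ∂P) atTop (𝓝 0) := by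
  simp_rw [setLIntegral_cascadeZ hM.meas hM.nonneg]
  rw [← lintegral_zero (μ := ν.restrict (subcriticalSet ν (entropyX P X₀)))]
  refine tendsto_lintegral_of_dominated_convergence (fun _ => 1)
    (fun n => measurable_comp_wordPrefix (fun w => ∫⁻ ω in _, ENNReal.ofReal (cascadeY X w ω) ∂P) n)
    (fun n => ae_of_all _ fun x =>
      (setLIntegral_le_lintegral _ _).trans (hM.lintegral_cascadeY x n).le) (by simp) ?_
  filter_upwards [ae_restrict_mem (measurableSet_subcriticalSet ν _),
    ae_restrict_of_ae (ae_forall_measure_cylinder_wordPrefix_ne_zero ν)] with x hx hpos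
  exact hM.tendsto_setLIntegral_cascadeY hx hpos hK

lemma cascadeZlim_restrict_subcriticalSet_ae_eq_zero (hM : CascadeM1 P X X₀)
    (ν : Measure (SymbSpace b)) [IsFiniteMeasure ν] :
    cascadeZlim X (ν.restrict (subcriticalSet ν (entropyX P X₀))) =ᵐ[P] 0 := by
  set m := ν.restrict (subcriticalSet ν (entropyX P X₀))
  have hbounded (K : ℕ) : ∀ᵐ ω ∂P, (∀ k, cascadeZ X ν k ω ≤ K) → cascadeZlim X m ω = 0 := by
    have hmeas : MeasurableSet {ω | ∀ k, cascadeZ X ν k ω ≤ K} := by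
      simp only [ofPred_forall]
      exact .iInter fun k => measurableSet_le (measurable_cascadeZ hM.meas ν k) measurable_const
    have hL1 := hM.tendsto_setLIntegral_cascadeZ_restrict_subcriticalSet ν K.cast_nonneg
    simp_rw [← Real.enorm_of_nonneg (cascadeZ_nonneg hM.nonneg _ _ _)] at hL1
    exact (ae_restrict_iff' hmeas).1 <| ae_eq_zero_of_tendsto_lintegral_enorm
      (fun n => (measurable_cascadeZ hM.meas m n).aemeasurable)
      (ae_restrict_of_ae (hM.ae_tendsto_cascadeZlim m)) hL1
  filter_upwards [ae_all_iff.2 hbounded, hM.ae_tendsto_cascadeZlim ν] with ω hω hlim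
  obtain ⟨B, hB⟩ := hlim.bddAbove_range
  obtain ⟨K, hK⟩ := exists_nat_ge B
  exact hω K fun k => (hB (mem_range_self k)).trans hK

lemma abs_integral_cascadeZlim_le (hM : CascadeM1 P X X₀) (ν : Measure (SymbSpace b))
    [IsFiniteMeasure ν] :
    |∫ ω, cascadeZlim X ν ω ∂P| ≤ ν.real (subcriticalSet ν (entropyX P X₀))ᶜ := by
  set A := subcriticalSet ν (entropyX P X₀)
  have hsplit : cascadeZlim X ν =ᵐ[P] cascadeZlim X (ν.restrict Aᶜ) := by
    have hadd := hM.cascadeZlim_add_ae_eq (ν.restrict A) (ν.restrict Aᶜ)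
    rw [Measure.restrict_add_restrict_compl (measurableSet_subcriticalSet ν _)] at hadd
    filter_upwards [hadd, hM.cascadeZlim_restrict_subcriticalSet_ae_eq_zero ν] with ω hω hzero
    rw [hω, Pi.add_apply, hzero, Pi.zero_apply, zero_add]
  rw [integral_congr_ae hsplit, ← Real.norm_eq_abs, ← toReal_enorm]
  refine ENNReal.toReal_mono (measure_ne_top _ _) ?_
  calc ‖∫ ω, cascadeZlim X (ν.restrict Aᶜ) ω ∂P‖ₑ
      ≤ ∫⁻ ω, ‖cascadeZlim X (ν.restrict Aᶜ) ω‖ₑ ∂P := enorm_integral_le_lintegral_enorm _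
    _ ≤ ν.restrict Aᶜ univ := hM.lintegral_enorm_cascadeZlim_le _
    _ = ν Aᶜ := Measure.restrict_apply_univ _

end CascadeM1

/-- **Theorem.** Let `Q` be a Mandelbrot multiplicative cascade (assumption (M1)) acting on
a Borel probability measure `ν` on `Σ`, and let
`Σ⁻_{h_X,ν} = {x : lower local dimension of ν at x < h_X}`. If `ν(Σ⁻_{h_X,ν}) > 0` then
`E_ℙ(Z) < 1`, and if `ν(Σ⁻_{h_X,ν}) = 1` then `E_ℙ(Z) = 0`. -/
theorem deficient_mass_of_subcritical_set
    {b : ℕ} (hb : 2 ≤ b)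
    {Ω : Type*} [MeasurableSpace Ω] (P : Measure Ω) [IsProbabilityMeasure P]
    (X : List (Fin b) → Ω → ℝ) (X₀ : Ω → ℝ)
    (hM1 : CascadeM1 P X X₀)
    (ν : Measure (SymbSpace b)) [IsProbabilityMeasure ν] :
    (0 < ν {x | lowerLocalDim ν x < entropyX P X₀} →
      ∫ ω, cascadeZlim X ν ω ∂P < 1) ∧
    (ν {x | lowerLocalDim ν x < entropyX P X₀} = 1 →
      ∫ ω, cascadeZlim X ν ω ∂P = 0) := by
  have hbound := hM1.abs_integral_cascadeZlim_le ν
  rw [probReal_compl_eq_one_sub (measurableSet_subcriticalSet ν _)] at hbound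
  refine ⟨fun hpos => ?_, fun hfull => ?_⟩
  · have hreal : 0 < ν.real (subcriticalSet ν (entropyX P X₀)) :=
      ENNReal.toReal_pos hpos.ne' (measure_ne_top _ _)
    linarith [le_abs_self (∫ ω, cascadeZlim X ν ω ∂P)]
  · have hreal : ν.real (subcriticalSet ν (entropyX P X₀)) = 1 :=
      (congrArg ENNReal.toReal hfull).trans ENNReal.toReal_one
    rwa [hreal, sub_self, abs_nonpos_iff] at hbound

end
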